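/- arXiv:2206.09348 — 2 statements merged into one kernel-verified Lean document; each statement's English description precedes it below -/
import Mathlib

section
/- If c ∈ R^X has c_x ≥ 0 for all x ∈ X, then for every y ∈ R^X and every class C of level l < L: σ_{c,y}(C) ≤ 1 − (1/μ^(l+1)) · [ ∑_{x∈C} P_{x|C}(y) c_x − (1/(2 μ^L)) ∑_{x∈C} P_{x|C}(y) c_x² ]. -/
/-!
The inequality is proved by induction on the number of levels below the class `C`.

At the lowest level it follows from `exp (-t) ≤ 1 - t + t² / 2` for `t ≥ 0`, averaged over `x ∈ C`
with the weights `P_{x|C}`, which sum to one. At a higher level the exponent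
`θ = μ^(l+2) / μ^(l+1)` lies in `[0, 1]`, so Bernoulli's inequality `s ^ θ ≤ 1 + θ (s - 1)`
linearizes the power sum; the factor `θ` turns the constant `1 / μ^(l+2)` of the induction
hypothesis for the children into `1 / μ^(l+1)`, and the tower rule
`∑_{x∈C} P_{x|C} g x = ∑_{C'⊲C} P_{C'|C} ∑_{x∈C'} P_{x|C'} g x` (`sum_condProb_mul`) reassembles
the averages of `c` and `c²`.
-/

noncomputable section

namespace NestedBandits

/-- A similarity structure of depth `L ≥ 1` on a finite set `X`, encoded by the map
`cls l x` = the similarity class of level `l` containing `x`. -/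
structure SimStruct (X : Type*) [Fintype X] [DecidableEq X] where
  L : ℕ
  one_le_L : 1 ≤ L
  cls : ℕ → X → Finset X
  mem_cls : ∀ l x, x ∈ cls l x
  cls_zero : ∀ x, cls 0 x = Finset.univ
  cls_L : ∀ x, cls L x = {x}
  cls_congr : ∀ l x z, z ∈ cls l x → cls l z = cls l x
  cls_refines : ∀ l x, l < L → cls (l + 1) x ⊆ cls l x

variable {X : Type*} [Fintype X] [DecidableEq X]

/-- The probability `p_C` of a class `C`. -/
def pC (p : X → ℝ) (C : Finset X) : ℝ := ∑ x ∈ C, p x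

/-- The simplex `Δ(X)` of probability vectors on `X`. -/
def simplex (X : Type*) [Fintype X] : Set (X → ℝ) :=
  {p | (∀ x, 0 ≤ p x) ∧ ∑ x, p x = 1}

/-- `t * log t`, with the convention `0 * log 0 = 0` (automatic since `Real.log 0 = 0`). -/
def xlogx (t : ℝ) : ℝ := t * Real.log t

/-- Auxiliary class score: `k` is the number of levels below the class (so the class has
level `S.L - k`). -/
def scoreAux (S : SimStruct X) (μ : ℕ → ℝ) (y : X → ℝ) : ℕ → Finset X → ℝ
  | 0, C => ∑ x ∈ C, y x
  | k + 1, C =>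
      μ (S.L - k) *
        Real.log (∑ C' ∈ C.image (S.cls (S.L - k)), Real.exp (scoreAux S μ y k C' / μ (S.L - k)))

/-- The class score `y_C` of a class `C` of level `l`. -/
def score (S : SimStruct X) (μ : ℕ → ℝ) (y : X → ℝ) (l : ℕ) (C : Finset X) : ℝ :=
  scoreAux S μ y (S.L - l) C

/-- The nested choice probability `P_{x | C}(y)` where `C = S.cls l x` is the level-`l`
class of `x`: the product of the conditional choice probabilities along the chain of
classes from `C` down to `{x}`. -/
def condProb (S : SimStruct X) (μ : ℕ → ℝ) (y : X → ℝ) (l : ℕ) (x : X) : ℝ :=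
  ∏ l' ∈ Finset.Ico l S.L,
    Real.exp ((score S μ y (l' + 1) (S.cls (l' + 1) x) - score S μ y l' (S.cls l' x)) / μ (l' + 1))

/-- The nested entropy `h_C(p)` of a class `C` of level `l`. -/
def nestEnt (S : SimStruct X) (μ : ℕ → ℝ) (p : X → ℝ) (l : ℕ) (C : Finset X) : ℝ :=
  ∑ l' ∈ Finset.Icc (max l 1) S.L,
    (μ l' - μ (l' + 1)) * ∑ C' ∈ C.image (S.cls l'), xlogx (pC p C')

/-- The conditional entropy `h(p | C)` of a class `C` of level `l`. -/
def condEnt (S : SimStruct X) (μ : ℕ → ℝ) (p : X → ℝ) (l : ℕ) (C : Finset X) : ℝ :=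
  if l < S.L then
    μ (l + 1) * ∑ C' ∈ C.image (S.cls (l + 1)), pC p C' * (Real.log (pC p C') - Real.log (pC p C))
  else 0

/-- Auxiliary nested power sum: `k = S.L - l ≥ 1` levels below the class. -/
def npsAux (S : SimStruct X) (μ : ℕ → ℝ) (y c : X → ℝ) : ℕ → Finset X → ℝ
  | 0, _ => 0
  | 1, C => ∑ x ∈ C, condProb S μ y (S.L - 1) x * Real.exp (-c x / μ S.L)
  | k + 2, C =>
      ∑ C' ∈ C.image (S.cls (S.L - (k + 1))),
        Real.exp ((score S μ y (S.L - (k + 1)) C' - score S μ y (S.L - (k + 2)) C) /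
            μ (S.L - (k + 1))) *
          npsAux S μ y c (k + 1) C' ^ (μ (S.L - k) / μ (S.L - (k + 1)))

/-- The nested power sum `σ_{c,y}(C)` for a class `C` of level `l < S.L`. -/
def nps (S : SimStruct X) (μ : ℕ → ℝ) (y c : X → ℝ) (l : ℕ) (C : Finset X) : ℝ :=
  npsAux S μ y c (S.L - l) C

/-- The Fenchel coupling `F(p, y) = h(p) + y_X - ⟨y, p⟩`. -/
def fench (S : SimStruct X) (μ : ℕ → ℝ) (p y : X → ℝ) : ℝ :=
  nestEnt S μ p 0 Finset.univ + score S μ y 0 Finset.univ - ∑ x, y x * p x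

/-- The effective number of alternatives `N_eff = (∑_l √(N^l) R̄_l)²`. -/
def Neff (S : SimStruct X) (R : ℕ → Finset X → ℝ) : ℝ :=
  (∑ l ∈ Finset.Icc 1 S.L,
      Real.sqrt ((Finset.univ.image (S.cls l)).card) *
        Real.sqrt ((∑ C ∈ Finset.univ.image (S.cls l), R l C ^ 2) /
          ((Finset.univ.image (S.cls l)).card))) ^ 2

/-- The conditional choice probability `P_{C' | C}(y)` of a child `C'` (of level `l + 1`) of a
class `C` of level `l`. -/
def stepProb (S : SimStruct X) (μ : ℕ → ℝ) (y : X → ℝ) (l : ℕ) (C C' : Finset X) : ℝ :=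
  Real.exp ((score S μ y (l + 1) C' - score S μ y l C) / μ (l + 1))

lemma stepProb_nonneg (S : SimStruct X) (μ : ℕ → ℝ) (y : X → ℝ) (l : ℕ) (C C' : Finset X) :
    0 ≤ stepProb S μ y l C C' := (Real.exp_pos _).le

lemma mu_pos (S : SimStruct X) (μ : ℕ → ℝ)
    (hμ_mono : ∀ l : ℕ, 1 ≤ l → l < S.L → μ (l + 1) ≤ μ l) (hμ_pos : 0 < μ S.L)
    (l : ℕ) (h1 : 1 ≤ l) (hl : l ≤ S.L) : 0 < μ l := by
  induction hl using Nat.decreasingInduction with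
  | self => exact hμ_pos
  | of_succ k hk ih => exact (ih (by omega)).trans_le (hμ_mono k h1 hk)

lemma score_eq (S : SimStruct X) (μ : ℕ → ℝ) (y : X → ℝ) (l : ℕ) (hl : l < S.L) (C : Finset X) :
    score S μ y l C = μ (l + 1) * Real.log
      (∑ C' ∈ C.image (S.cls (l + 1)), Real.exp (score S μ y (l + 1) C' / μ (l + 1))) := by
  obtain ⟨k, hk⟩ : ∃ k, S.L = l + k + 1 := ⟨S.L - l - 1, by omega⟩
  have h1 : S.L - l = k + 1 := by omega
  have h2 : S.L - (l + 1) = k := by omega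
  have h3 : S.L - k = l + 1 := by omega
  unfold score
  rw [h1, h2, scoreAux, h3]

lemma sum_stepProb (S : SimStruct X) (μ : ℕ → ℝ) (y : X → ℝ) (l : ℕ) (hl : l < S.L)
    (hμ : 0 < μ (l + 1)) (C : Finset X) (hC : C.Nonempty) :
    ∑ C' ∈ C.image (S.cls (l + 1)), stepProb S μ y l C C' = 1 := by
  have hpos : 0 < ∑ C' ∈ C.image (S.cls (l + 1)),
      Real.exp (score S μ y (l + 1) C' / μ (l + 1)) :=
    Finset.sum_pos (fun _ _ => Real.exp_pos _) (hC.image _)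
  have hs : score S μ y l C / μ (l + 1) = Real.log
      (∑ C' ∈ C.image (S.cls (l + 1)), Real.exp (score S μ y (l + 1) C' / μ (l + 1))) := by
    rw [score_eq S μ y l hl C, mul_div_cancel_left₀ _ hμ.ne']
  simp only [stepProb, sub_div, Real.exp_sub]
  rw [← Finset.sum_div, hs, Real.exp_log hpos, div_self hpos.ne']

/-- A child of a level-`l` class, given as a member of the image, is the fibre of
`S.cls (l + 1)` over itself. -/
lemma filter_cls_eq (S : SimStruct X) (l : ℕ) (hl : l < S.L) (x₀ : X) (C' : Finset X)
    (hC' : C' ∈ (S.cls l x₀).image (S.cls (l + 1))) :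
    (S.cls l x₀).filter (fun x => S.cls (l + 1) x = C') = C' := by
  obtain ⟨z, hz, rfl⟩ := Finset.mem_image.1 hC'
  ext x
  rw [Finset.mem_filter]
  constructor
  · rintro ⟨-, h⟩
    rw [← h]
    exact S.mem_cls _ _
  · intro h
    refine ⟨?_, S.cls_congr _ _ _ h⟩
    rw [← S.cls_congr _ _ _ hz]
    exact S.cls_refines _ _ hl h

/-- The tower rule for nested choice probabilities. -/
lemma sum_condProb_mul (S : SimStruct X) (μ : ℕ → ℝ) (y g : X → ℝ) (l : ℕ) (hl : l < S.L)
    (x₀ : X) :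
    ∑ x ∈ S.cls l x₀, condProb S μ y l x * g x =
      ∑ C' ∈ (S.cls l x₀).image (S.cls (l + 1)), stepProb S μ y l (S.cls l x₀) C' *
        ∑ x ∈ C', condProb S μ y (l + 1) x * g x := by
  rw [← Finset.sum_fiberwise_of_maps_to (fun x hx => Finset.mem_image_of_mem (S.cls (l + 1)) hx)]
  refine Finset.sum_congr rfl fun C' hC' => ?_
  rw [Finset.mul_sum]
  conv_rhs => rw [← filter_cls_eq S l hl x₀ C' hC']
  refine Finset.sum_congr rfl fun x hx => ?_
  rw [Finset.mem_filter] at hx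
  rw [condProb, Finset.prod_eq_prod_Ico_succ_bot hl, S.cls_congr _ _ _ hx.1, hx.2,
    filter_cls_eq S l hl x₀ C' hC', ← mul_assoc]
  rfl

lemma condProb_nonneg (S : SimStruct X) (μ : ℕ → ℝ) (y : X → ℝ) (l : ℕ) (x : X) :
    0 ≤ condProb S μ y l x := Finset.prod_nonneg fun _ _ => (Real.exp_pos _).le

/-- On the lowest nontrivial level the children of a class are singletons, so the choice
probabilities are single-step ones and sum to one. -/
lemma sum_condProb_last (S : SimStruct X) (μ : ℕ → ℝ) (y : X → ℝ) (l : ℕ) (hl : S.L = l + 1)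
    (hμ : 0 < μ (l + 1)) (x₀ : X) : ∑ x ∈ S.cls l x₀, condProb S μ y l x = 1 := by
  have h := sum_condProb_mul S μ y (fun _ => 1) l (by omega) x₀
  simp only [mul_one] at h
  rw [h, ← sum_stepProb S μ y l (by omega) hμ (S.cls l x₀) ⟨x₀, S.mem_cls _ _⟩]
  refine Finset.sum_congr rfl fun C' hC' => ?_
  obtain ⟨z, -, rfl⟩ := Finset.mem_image.1 hC'
  have hz : S.cls (l + 1) z = {z} := by rw [← hl]; exact S.cls_L z
  simp [hz, condProb, hl]

lemma nps_last (S : SimStruct X) (μ : ℕ → ℝ) (y c : X → ℝ) (l : ℕ) (hl : S.L = l + 1)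
    (C : Finset X) :
    nps S μ y c l C = ∑ x ∈ C, condProb S μ y l x * Real.exp (-c x / μ (l + 1)) := by
  have h1 : S.L - l = 1 := by omega
  have h2 : S.L - 1 = l := by omega
  rw [nps, h1, npsAux, h2, hl]

lemma nps_step (S : SimStruct X) (μ : ℕ → ℝ) (y c : X → ℝ) (l : ℕ) (hl : l + 1 < S.L)
    (C : Finset X) :
    nps S μ y c l C = ∑ C' ∈ C.image (S.cls (l + 1)), stepProb S μ y l C C' *
      nps S μ y c (l + 1) C' ^ (μ (l + 2) / μ (l + 1)) := by
  obtain ⟨k, hk⟩ : ∃ k, S.L = l + k + 2 := ⟨S.L - l - 2, by omega⟩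
  have h1 : S.L - l = k + 2 := by omega
  have h2 : S.L - (l + 1) = k + 1 := by omega
  have h3 : S.L - (k + 1) = l + 1 := by omega
  have h4 : S.L - (k + 2) = l := by omega
  have h5 : S.L - k = l + 2 := by omega
  simp only [nps, stepProb]
  rw [h1, h2, npsAux, h3, h4, h5]

lemma npsAux_nonneg (S : SimStruct X) (μ : ℕ → ℝ) (y c : X → ℝ) (k : ℕ) (C : Finset X) :
    0 ≤ npsAux S μ y c k C := by
  induction k generalizing C with
  | zero => exact le_rfl
  | succ k ih =>
    cases k with
    | zero =>
      exact Finset.sum_nonneg fun x _ => mul_nonneg (condProb_nonneg ..) (Real.exp_pos _).le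
    | succ k =>
      exact Finset.sum_nonneg fun C' _ =>
        mul_nonneg (Real.exp_pos _).le (Real.rpow_nonneg (ih C') _)

lemma exp_neg_le (t : ℝ) (ht : 0 ≤ t) : Real.exp (-t) ≤ 1 - t + t ^ 2 / 2 := by
  -- The product of `1 + t + t²/2 ≤ exp t` with the right-hand side is `1 + t⁴/4 ≥ 1`.
  have h := Real.quadratic_le_exp_of_nonneg ht
  rw [Real.exp_neg, inv_le_iff_one_le_mul₀ (Real.exp_pos t)]
  have h2 : 0 ≤ 1 - t + t ^ 2 / 2 := by nlinarith [sq_nonneg (t - 1)]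
  nlinarith [mul_le_mul_of_nonneg_left h h2, sq_nonneg (t ^ 2)]

theorem stmt5 (S : SimStruct X) (μ : ℕ → ℝ)
    (hμ_mono : ∀ l : ℕ, 1 ≤ l → l < S.L → μ (l + 1) ≤ μ l)
    (hμ_pos : 0 < μ S.L) (hμ_last : μ (S.L + 1) = 0)
    (c : X → ℝ) (hc : ∀ x, 0 ≤ c x) (y : X → ℝ) (l : ℕ) (hl : l < S.L) (x₀ : X) :
    nps S μ y c l (S.cls l x₀) ≤
      1 - (1 / μ (l + 1)) *
        ((∑ x ∈ S.cls l x₀, condProb S μ y l x * c x) -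
          (1 / (2 * μ S.L)) * ∑ x ∈ S.cls l x₀, condProb S μ y l x * c x ^ 2) := by
  obtain ⟨k, hk⟩ : ∃ k, S.L = l + k + 1 := ⟨S.L - l - 1, by omega⟩
  induction k generalizing l x₀ with
  | zero =>
    have hμ : 0 < μ (l + 1) := mu_pos S μ hμ_mono hμ_pos (l + 1) (by omega) (by omega)
    rw [nps_last S μ y c l hk, show S.L = l + 1 from hk]
    calc _ ≤ ∑ x ∈ S.cls l x₀, (condProb S μ y l x - (1 / μ (l + 1)) *
              (condProb S μ y l x * c x -
                (1 / (2 * μ (l + 1))) * (condProb S μ y l x * c x ^ 2))) := by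
          refine Finset.sum_le_sum fun x _ => ?_
          have h := exp_neg_le (c x / μ (l + 1)) (div_nonneg (hc x) hμ.le)
          rw [← neg_div] at h
          refine (mul_le_mul_of_nonneg_left h (condProb_nonneg S μ y l x)).trans_eq ?_
          field_simp
          ring
      _ = _ := by
          rw [Finset.sum_sub_distrib, ← Finset.mul_sum, Finset.sum_sub_distrib,
            ← Finset.mul_sum, sum_condProb_last S μ y l hk hμ]
  | succ k ih =>
    have hμ : 0 < μ (l + 1) := mu_pos S μ hμ_mono hμ_pos (l + 1) (by omega) (by omega)
    have hμ' : 0 < μ (l + 2) := mu_pos S μ hμ_mono hμ_pos (l + 2) (by omega) (by omega)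
    have hθ : μ (l + 2) / μ (l + 1) ≤ 1 :=
      (div_le_one hμ).2 (hμ_mono (l + 1) (by omega) (by omega))
    rw [nps_step S μ y c l (by omega), sum_condProb_mul S μ y c l hl,
      sum_condProb_mul S μ y (fun x => c x ^ 2) l hl]
    calc _ ≤ ∑ C' ∈ (S.cls l x₀).image (S.cls (l + 1)),
            (stepProb S μ y l (S.cls l x₀) C' - (1 / μ (l + 1)) *
              (stepProb S μ y l (S.cls l x₀) C' * (∑ x ∈ C', condProb S μ y (l + 1) x * c x) -
                (1 / (2 * μ S.L)) * (stepProb S μ y l (S.cls l x₀) C' *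
                  ∑ x ∈ C', condProb S μ y (l + 1) x * c x ^ 2))) := by
          refine Finset.sum_le_sum fun C' hC' => ?_
          obtain ⟨z, -, rfl⟩ := Finset.mem_image.1 hC'
          have hih := ih (l + 1) (by omega) z (by omega)
          have hs : 0 ≤ nps S μ y c (l + 1) (S.cls (l + 1) z) := npsAux_nonneg ..
          have hb := rpow_one_add_le_one_add_mul_self
            (s := nps S μ y c (l + 1) (S.cls (l + 1) z) - 1) (by linarith)
            (div_pos hμ' hμ).le hθ
          rw [add_sub_cancel] at hb
          have hb' := hb.trans (add_le_add_right (mul_le_mul_of_nonneg_left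
            (sub_le_sub_right hih 1) (div_pos hμ' hμ).le) 1)
          refine (mul_le_mul_of_nonneg_left hb'
            (stepProb_nonneg S μ y l (S.cls l x₀) (S.cls (l + 1) z))).trans_eq ?_
          rw [show l + 1 + 1 = l + 2 from rfl]
          field_simp
          ring
      _ = _ := by
          rw [Finset.sum_sub_distrib, ← Finset.mul_sum, Finset.sum_sub_distrib,
            ← Finset.mul_sum, sum_stepProb S μ y l hl hμ _ ⟨x₀, S.mem_cls _ _⟩]

end NestedBandits
end
end

section
/- For every p ∈ Δ(X), F(p, 0) = h(p) − min_{q ∈ Δ(X)} h(q); equivalently, the root class score of the zero vector equals −min_{q ∈ Δ(X)} h(q). -/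
/-!
Both parts say that the root score of the zero vector is minus the minimum of the total nested
entropy (`fench` at `y = 0` is the entropy plus that score). This is the chain rule for entropy
combined with Gibbs' variational principle, applied level by level from the leaves up.

For a class `C` of level `l`, let `E_C(p)` be the part of the nested entropy coming from the levels
strictly below `C` (`tailEnt`). By induction on the number of levels below `C`,
`μ^{l+1} p_C log p_C - p_C y_C ≤ E_C(p)` for all `p ≥ 0` (`tailEnt_ge`). In the inductive
step, `E_C` splits into the contribution of level `l + 1` and the `E_{C'}` of the children
(`tailEnt_step`); the weights `μ^{l+1} - μ^{l+2}` telescope, and what remains is `μ^{l+1}` times the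
Gibbs inequality (`gibbs_le`) for the masses of the children. Equality in the Gibbs inequality holds
for masses proportional to `exp (y_{C'} / μ^{l+1})` (`gibbs_eq`), so gluing optimizers of the
children gives an optimizer of prescribed mass on `C` (`exists_tailEnt_eq`).

At the root with mass `1` the term `p_C log p_C` vanishes, so `-y_X` is the least value of `h`.
For empty `X`, both sides are zero by the conventions `sInf ∅ = 0` and `log 0 = 0`.
-/

noncomputable section

namespace NestedBandits

variable {X : Type*} [Fintype X] [DecidableEq X]

/-- Gibbs' inequality: relative entropy is nonnegative, written for a mass `∑ w` that need not
be `1`. -/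
lemma gibbs_le {ι : Type*} (s : Finset ι) (w a : ι → ℝ) (hw : ∀ i ∈ s, 0 ≤ w i) :
    xlogx (∑ i ∈ s, w i) - (∑ i ∈ s, w i) * Real.log (∑ i ∈ s, Real.exp (a i)) ≤
      ∑ i ∈ s, (xlogx (w i) - w i * a i) := by
  rcases (Finset.sum_nonneg hw).eq_or_lt with h0 | hW
  · have hz := (Finset.sum_eq_zero_iff_of_nonneg hw).1 h0.symm
    rw [← h0, Finset.sum_eq_zero (f := fun i => xlogx (w i) - w i * a i)
      (fun i hi => by simp [hz i hi, xlogx])]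
    simp [xlogx]
  have hs : s.Nonempty := by
    rw [Finset.nonempty_iff_ne_empty]
    rintro rfl
    simp at hW
  have hZ : 0 < ∑ i ∈ s, Real.exp (a i) := Finset.sum_pos (fun i _ => Real.exp_pos _) hs
  set W := ∑ i ∈ s, w i with hWdef
  set Z := ∑ i ∈ s, Real.exp (a i) with hZdef
  -- Termwise this is `x log (x / y) ≥ x - y` with `y = W exp (a i) / Z`.
  have key : ∀ i ∈ s, w i - W / Z * Real.exp (a i) + w i * (Real.log W - Real.log Z) ≤
      xlogx (w i) - w i * a i := by
    intro i hi
    rcases (hw i hi).eq_or_lt with h | h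
    · rw [← h]
      have : 0 < W / Z * Real.exp (a i) := by positivity
      simp only [xlogx, zero_mul, zero_sub, add_zero]
      linarith
    · have hy : 0 < W / Z * Real.exp (a i) := by positivity
      have h1 := Real.log_le_sub_one_of_pos (div_pos hy h)
      rw [Real.log_div hy.ne' h.ne', Real.log_mul (div_pos hW hZ).ne' (Real.exp_pos _).ne',
        Real.log_div hW.ne' hZ.ne', Real.log_exp] at h1
      have h2 := mul_le_mul_of_nonneg_left h1 h.le
      rw [mul_sub (w i) (_ / _), mul_div_cancel₀ _ h.ne'] at h2
      unfold xlogx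
      linarith
  have hsum := Finset.sum_le_sum key
  rw [Finset.sum_add_distrib, Finset.sum_sub_distrib, ← Finset.mul_sum, ← Finset.sum_mul,
    ← hWdef, ← hZdef, div_mul_cancel₀ _ hZ.ne'] at hsum
  unfold xlogx at *
  linarith

/-- Equality in Gibbs' inequality for logit weights of total mass `m`. -/
lemma gibbs_eq {ι : Type*} (s : Finset ι) (a : ι → ℝ) (m : ℝ) (hs : s.Nonempty) :
    ∑ i ∈ s, (xlogx (m * (Real.exp (a i) / ∑ j ∈ s, Real.exp (a j))) -
        m * (Real.exp (a i) / ∑ j ∈ s, Real.exp (a j)) * a i) =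
      xlogx m - m * Real.log (∑ i ∈ s, Real.exp (a i)) := by
  have hZ : 0 < ∑ i ∈ s, Real.exp (a i) := Finset.sum_pos (fun i _ => Real.exp_pos _) hs
  set Z := ∑ i ∈ s, Real.exp (a i) with hZdef
  rcases eq_or_ne m 0 with rfl | hm
  · simp [xlogx]
  have key : ∀ i ∈ s, xlogx (m * (Real.exp (a i) / Z)) - m * (Real.exp (a i) / Z) * a i =
      Real.exp (a i) * (m / Z * (Real.log m - Real.log Z)) := by
    intro i _
    unfold xlogx
    rw [Real.log_mul hm (div_pos (Real.exp_pos _) hZ).ne',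
      Real.log_div (Real.exp_pos _).ne' hZ.ne', Real.log_exp]
    ring
  rw [Finset.sum_congr rfl key, ← Finset.sum_mul, ← hZdef]
  unfold xlogx
  field_simp

lemma cls_anti (S : SimStruct X) {l l' : ℕ} (h : l ≤ l') (hL : l' ≤ S.L) (x : X) :
    S.cls l' x ⊆ S.cls l x := by
  induction l', h using Nat.le_induction with
  | base => exact subset_rfl
  | succ n _ ih => exact (S.cls_refines n x (by omega)).trans (ih (by omega))

/-- A class is the union of its children. -/
lemma cls_eq_biUnion (S : SimStruct X) {l : ℕ} (hl : l < S.L) (x : X) :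
    S.cls l x = ((S.cls l x).image (S.cls (l + 1))).biUnion id := by
  ext z
  simp only [Finset.mem_biUnion, Finset.mem_image, id]
  constructor
  · exact fun hz => ⟨_, ⟨z, hz, rfl⟩, S.mem_cls _ _⟩
  · rintro ⟨_, ⟨w, hw, rfl⟩, hz⟩
    rw [← S.cls_congr l x w hw]
    exact S.cls_refines l w hl hz

lemma pC_children (S : SimStruct X) (p : X → ℝ) {l : ℕ} (hl : l < S.L) (x : X) :
    ∑ C' ∈ (S.cls l x).image (S.cls (l + 1)), pC p C' = pC p (S.cls l x) := by
  conv_rhs => rw [cls_eq_biUnion S hl x, pC]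
  rw [Finset.sum_biUnion]
  · rfl
  intro A hA B hB hne
  obtain ⟨a, _, rfl⟩ := Finset.mem_image.1 hA
  obtain ⟨b, _, rfl⟩ := Finset.mem_image.1 hB
  rw [Function.onFun, Finset.disjoint_left]
  intro z hza hzb
  exact hne ((S.cls_congr _ _ _ hza).symm.trans (S.cls_congr _ _ _ hzb))

/-- The classes of a deeper level `l'` inside a class are partitioned by its children. -/
lemma sum_descend (S : SimStruct X) (g : Finset X → ℝ) {l l' : ℕ} (hl : l + 1 ≤ l')
    (hL : l' ≤ S.L) (x : X) :
    ∑ C'' ∈ (S.cls l x).image (S.cls l'), g C'' =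
      ∑ C' ∈ (S.cls l x).image (S.cls (l + 1)), ∑ C'' ∈ C'.image (S.cls l'), g C'' := by
  conv_lhs => rw [cls_eq_biUnion S (by omega : l < S.L) x, Finset.biUnion_image]
  rw [Finset.sum_biUnion]
  · rfl
  intro A hA B hB hne
  obtain ⟨a, _, rfl⟩ := Finset.mem_image.1 hA
  obtain ⟨b, _, rfl⟩ := Finset.mem_image.1 hB
  rw [Function.onFun, Finset.disjoint_left]
  intro D hDa hDb
  obtain ⟨u, hu, rfl⟩ := Finset.mem_image.1 hDa
  obtain ⟨v, hv, huv⟩ := Finset.mem_image.1 hDb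
  have h1 : v ∈ S.cls (l + 1) u := cls_anti S hl hL u (huv ▸ S.mem_cls l' v)
  exact hne (((S.cls_congr _ _ _ hu).symm.trans (S.cls_congr _ _ _ h1).symm).trans
    (S.cls_congr _ _ _ hv))

/-- The part of the nested entropy of a class `C` of level `l` that comes from the levels strictly
below `l`. At the root it is the total nested entropy. -/
def tailEnt (S : SimStruct X) (μ : ℕ → ℝ) (p : X → ℝ) (l : ℕ) (C : Finset X) : ℝ :=
  ∑ l' ∈ Finset.Icc (l + 1) S.L,
    (μ l' - μ (l' + 1)) * ∑ C' ∈ C.image (S.cls l'), xlogx (pC p C')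

lemma tailEnt_step (S : SimStruct X) (μ : ℕ → ℝ) (p : X → ℝ) {l : ℕ} (hl : l < S.L) (x : X) :
    tailEnt S μ p l (S.cls l x) = ∑ C' ∈ (S.cls l x).image (S.cls (l + 1)),
      ((μ (l + 1) - μ (l + 2)) * xlogx (pC p C') + tailEnt S μ p (l + 1) C') := by
  rw [tailEnt, ← Finset.add_sum_Ioc_eq_sum_Icc (by omega : l + 1 ≤ S.L), Finset.sum_add_distrib,
    ← Finset.mul_sum]
  congr 1
  simp only [tailEnt]
  rw [Finset.sum_comm]
  refine Finset.sum_congr (by ext; simp) fun l' hl' => ?_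
  rw [Finset.mem_Icc] at hl'
  rw [sum_descend S _ (by omega) hl'.2, Finset.mul_sum]

lemma tailEnt_last (S : SimStruct X) (μ : ℕ → ℝ) (p : X → ℝ) (C : Finset X) :
    tailEnt S μ p S.L C = 0 := by
  simp [tailEnt]

lemma score_last (S : SimStruct X) (μ : ℕ → ℝ) (C : Finset X) : score S μ 0 S.L C = 0 := by
  simp [score, scoreAux]

lemma score_step (S : SimStruct X) (μ : ℕ → ℝ) (y : X → ℝ) {l : ℕ} (hl : l < S.L)
    (C : Finset X) :
    score S μ y l C = μ (l + 1) *
      Real.log (∑ C' ∈ C.image (S.cls (l + 1)), Real.exp (score S μ y (l + 1) C' / μ (l + 1))) := by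
  obtain ⟨k, hk⟩ : ∃ k, S.L = l + 1 + k := ⟨S.L - (l + 1), by omega⟩
  have h1 : S.L - l = k + 1 := by omega
  have h2 : S.L - (l + 1) = k := by omega
  have h3 : S.L - k = l + 1 := by omega
  simp only [score, h1, h2, scoreAux, h3]

lemma tailEnt_ge (S : SimStruct X) (μ : ℕ → ℝ) (hpos : ∀ l, 1 ≤ l → l ≤ S.L → 0 < μ l)
    (hμ_last : μ (S.L + 1) = 0) (p : X → ℝ) (hp : ∀ x, 0 ≤ p x) (k : ℕ) :
    ∀ l, l + k = S.L → ∀ x, μ (l + 1) * xlogx (pC p (S.cls l x)) -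
      pC p (S.cls l x) * score S μ 0 l (S.cls l x) ≤ tailEnt S μ p l (S.cls l x) := by
  induction k with
  | zero =>
    rintro l rfl x
    rw [hμ_last, score_last, tailEnt_last]
    simp
  | succ k ih =>
    intro l hl x
    have hlt : l < S.L := by omega
    have hμ := hpos (l + 1) (by omega) (by omega)
    have hg := mul_le_mul_of_nonneg_left
      (gibbs_le ((S.cls l x).image (S.cls (l + 1))) (pC p)
        (fun C' => score S μ 0 (l + 1) C' / μ (l + 1))
        (fun C' _ => Finset.sum_nonneg fun x _ => hp x)) hμ.le
    rw [pC_children S p hlt] at hg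
    rw [tailEnt_step S μ p hlt, score_step S μ 0 hlt]
    calc _ = _ := by ring
      _ ≤ _ := hg
      _ ≤ _ := by
        rw [Finset.mul_sum]
        refine Finset.sum_le_sum fun C' hC' => ?_
        obtain ⟨z, _, rfl⟩ := Finset.mem_image.1 hC'
        have hi := ih (l + 1) (by omega) z
        rw [mul_sub, mul_left_comm, mul_div_cancel₀ _ hμ.ne']
        linarith

lemma pC_congr {p q : X → ℝ} {C : Finset X} (h : ∀ x ∈ C, p x = q x) : pC p C = pC q C :=
  Finset.sum_congr rfl h

/-- The entropy below a class only depends on the masses of the points of that class. -/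
lemma tailEnt_congr (S : SimStruct X) (μ : ℕ → ℝ) {p q : X → ℝ} {l : ℕ} {x : X}
    (h : ∀ z ∈ S.cls l x, p z = q z) :
    tailEnt S μ p l (S.cls l x) = tailEnt S μ q l (S.cls l x) := by
  refine Finset.sum_congr rfl fun l' hl' => ?_
  rw [Finset.mem_Icc] at hl'
  congr 1
  refine Finset.sum_congr rfl fun C' hC' => ?_
  obtain ⟨z, hz, rfl⟩ := Finset.mem_image.1 hC'
  rw [pC_congr]
  intro w hw
  apply h
  rw [← S.cls_congr l x z hz]
  exact cls_anti S (by omega) hl'.2 z hw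

/-- The bound `tailEnt_ge` is attained on every class, with any prescribed mass `m ≥ 0`. -/
lemma exists_tailEnt_eq (S : SimStruct X) (μ : ℕ → ℝ) (hpos : ∀ l, 1 ≤ l → l ≤ S.L → 0 < μ l)
    (hμ_last : μ (S.L + 1) = 0) (k : ℕ) :
    ∀ l, l + k = S.L → ∀ x, ∀ m : ℝ, 0 ≤ m → ∃ p : X → ℝ, (∀ z, 0 ≤ p z) ∧
      pC p (S.cls l x) = m ∧ tailEnt S μ p l (S.cls l x) =
        μ (l + 1) * xlogx m - m * score S μ 0 l (S.cls l x) := by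
  induction k with
  | zero =>
    rintro l rfl x m hm
    refine ⟨fun _ => m, fun _ => hm, ?_, ?_⟩
    · simp [S.cls_L, pC]
    · rw [hμ_last, score_last, tailEnt_last]
      simp
  | succ k ih =>
    intro l hl x m hm
    have hlt : l < S.L := by omega
    have hμ := hpos (l + 1) (by omega) (by omega)
    set T := (S.cls l x).image (S.cls (l + 1)) with hT
    set a : Finset X → ℝ := fun C' => score S μ 0 (l + 1) C' / μ (l + 1) with ha
    have hTne : T.Nonempty := ⟨_, Finset.mem_image_of_mem _ (S.mem_cls l x)⟩
    have hZ : 0 < ∑ C' ∈ T, Real.exp (a C') := Finset.sum_pos (fun i _ => Real.exp_pos _) hTne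
    set w : Finset X → ℝ := fun C' => m * (Real.exp (a C') / ∑ D ∈ T, Real.exp (a D)) with hw
    have hw0 : ∀ C', 0 ≤ w C' := fun C' => by positivity
    choose f hf0 hfm hfE using fun z => ih (l + 1) (by omega) z _ (hw0 (S.cls (l + 1) z))
    -- Two points of the same class must use the same optimizer, so a representative is fixed.
    classical
    let r : Finset X → X := fun C' => if h : ∃ z, S.cls (l + 1) z = C' then h.choose else x
    have hr : ∀ z, S.cls (l + 1) (r (S.cls (l + 1) z)) = S.cls (l + 1) z := fun z => by
      have h : ∃ u, S.cls (l + 1) u = S.cls (l + 1) z := ⟨z, rfl⟩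
      simp only [r, dif_pos h]
      exact h.choose_spec
    let p : X → ℝ := fun z => f (r (S.cls (l + 1) z)) z
    have hp : ∀ z, ∀ u ∈ S.cls (l + 1) z, p u = f (r (S.cls (l + 1) z)) u := fun z u hu => by
      simp only [p, S.cls_congr _ _ _ hu]
    have hpm : ∀ C' ∈ T, pC p C' = w C' := by
      intro C' hC'
      obtain ⟨z, _, rfl⟩ := Finset.mem_image.1 hC'
      have := hfm (r (S.cls (l + 1) z))
      rw [hr] at this
      rw [pC_congr (hp z), this]
    have hpE : ∀ C' ∈ T, tailEnt S μ p (l + 1) C' =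
        μ (l + 2) * xlogx (w C') - w C' * score S μ 0 (l + 1) C' := by
      intro C' hC'
      obtain ⟨z, _, rfl⟩ := Finset.mem_image.1 hC'
      have := hfE (r (S.cls (l + 1) z))
      rw [hr] at this
      rw [tailEnt_congr S μ (hp z), this]
    refine ⟨p, fun z => hf0 _ _, ?_, ?_⟩
    · rw [← pC_children S p hlt, Finset.sum_congr rfl hpm, ← Finset.mul_sum, ← Finset.sum_div,
        div_self hZ.ne', mul_one]
    · have hg : ∑ C' ∈ T, (xlogx (w C') - w C' * a C') =
          xlogx m - m * Real.log (∑ C' ∈ T, Real.exp (a C')) := gibbs_eq T a m hTne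
      rw [tailEnt_step S μ p hlt, score_step S μ 0 hlt]
      calc _ = ∑ C' ∈ T, μ (l + 1) * (xlogx (w C') - w C' * a C') := by
            refine Finset.sum_congr rfl fun C' hC' => ?_
            rw [hpE C' hC', hpm C' hC', mul_sub, mul_left_comm (μ (l + 1)), ha,
              mul_div_cancel₀ _ hμ.ne']
            ring
        _ = _ := by
            rw [← Finset.mul_sum, hg]
            ring

/-- The root score of the zero vector is minus the minimal nested entropy. -/
lemma score_zero (S : SimStruct X) (μ : ℕ → ℝ)
    (hμ_mono : ∀ l : ℕ, 1 ≤ l → l < S.L → μ (l + 1) ≤ μ l)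
    (hμ_pos : 0 < μ S.L) (hμ_last : μ (S.L + 1) = 0) :
    score S μ 0 0 Finset.univ =
      -sInf ((fun q => nestEnt S μ q 0 Finset.univ) '' simplex X) := by
  have hL := S.one_le_L
  rcases isEmpty_or_nonempty X with hX | ⟨⟨x⟩⟩
  · have : simplex X = ∅ := by
      ext p
      simp [simplex]
    rw [this, score_step S μ 0 (by omega)]
    simp
  have hpos : ∀ l, 1 ≤ l → l ≤ S.L → 0 < μ l := by
    intro l h1 h2
    induction h2 using Nat.decreasingInduction with
    | self => exact hμ_pos
    | of_succ n hn ih => exact (ih (by omega)).trans_le (hμ_mono n h1 hn)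
  have hE : ∀ q, nestEnt S μ q 0 Finset.univ = tailEnt S μ q 0 Finset.univ := fun q => rfl
  have hleast : IsLeast ((fun q => nestEnt S μ q 0 Finset.univ) '' simplex X)
      (-score S μ 0 0 Finset.univ) := by
    constructor
    · obtain ⟨p, hp0, hp1, hpE⟩ := exists_tailEnt_eq S μ hpos hμ_last S.L 0 (by omega) x 1 one_pos.le
      rw [S.cls_zero] at hp1 hpE
      refine ⟨p, ⟨hp0, hp1⟩, ?_⟩
      simp only [hE, hpE]
      simp [xlogx]
    · rintro _ ⟨p, ⟨hp0, hp1⟩, rfl⟩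
      have h := tailEnt_ge S μ hpos hμ_last p hp0 S.L 0 (by omega) x
      rw [S.cls_zero, show pC p Finset.univ = 1 from hp1] at h
      simpa [hE, xlogx] using h
  rw [hleast.csInf_eq, neg_neg]

theorem stmt11 (S : SimStruct X) (μ : ℕ → ℝ)
    (hμ_mono : ∀ l : ℕ, 1 ≤ l → l < S.L → μ (l + 1) ≤ μ l)
    (hμ_pos : 0 < μ S.L) (hμ_last : μ (S.L + 1) = 0) :
    (∀ p ∈ simplex X,
      fench S μ p 0 =
        nestEnt S μ p 0 Finset.univ -
          sInf ((fun q => nestEnt S μ q 0 Finset.univ) '' simplex X)) ∧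
    score S μ 0 0 Finset.univ =
      -sInf ((fun q => nestEnt S μ q 0 Finset.univ) '' simplex X) := by
  have h := score_zero S μ hμ_mono hμ_pos hμ_last
  refine ⟨fun p _ => ?_, h⟩
  simp [fench, h, sub_eq_add_neg]

end NestedBandits
end
end
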